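/- Let φ : V_+ → ℂ be radial with profile F, with φ(v_0) = 1 and M_2 φ = F(2)·φ on V_+. Then for every n ∈ ℕ, M_{2n} φ = F(2n)·φ on V_+. -/

import Mathlib

open scoped BigOperators ComplexOrder

/-- A semi-homogeneous tree `T_{q_+,q_-}`: a connected acyclic simple graph with a
parity function `eps` (true = `+`, false = `−`) that flips across edges, in which every
vertex of parity `+` has exactly `qp + 1` neighbors and every vertex of parity `−` has
exactly `qm + 1` neighbors.  Spheres are finite (this follows from local finiteness
and connectedness, and is recorded as a field for convenience). -/
structure SemiHomTree (qp qm : ℕ) (V : Type) where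
  G : SimpleGraph V
  connected : G.Connected
  acyclic : G.IsAcyclic
  eps : V → Bool
  adj_parity : ∀ ⦃v w : V⦄, G.Adj v w → eps w = !eps v
  nbr_finite : ∀ v : V, {w : V | G.Adj v w}.Finite
  degree_plus : ∀ v : V, eps v = true → {w : V | G.Adj v w}.ncard = qp + 1
  degree_minus : ∀ v : V, eps v = false → {w : V | G.Adj v w}.ncard = qm + 1
  sphere_finite : ∀ (v : V) (n : ℕ), {w : V | G.dist v w = n}.Finite

/-- The averaging operator `M_n`: average of `f` over the sphere of radius `n` around `v`. -/
noncomputable def Mop {qp qm : ℕ} {V : Type} (T : SemiHomTree qp qm V)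
    (n : ℕ) (f : V → ℂ) (v : V) : ℂ :=
  (({w : V | T.G.dist v w = n}.ncard : ℂ))⁻¹ * ∑ᶠ w ∈ {w : V | T.G.dist v w = n}, f w

/-- The Laplace operator `μ₁`: the average of `f` over the neighbors of `v`. -/
noncomputable def lap {qp qm : ℕ} {V : Type} (T : SemiHomTree qp qm V)
    (f : V → ℂ) (v : V) : ℂ :=
  (((if T.eps v then qp else qm : ℕ) : ℂ) + 1)⁻¹ * ∑ᶠ w ∈ {w : V | T.G.Adj v w}, f w

/-!
Let `f` be a function whose sum over the neighbors of `v` is `α (ε v) * f v`, where `α` depends only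
on the parity of `v`. Every vertex other than the center of a family of spheres has a unique
neighbor closer to that center, so the sphere sums of `f` satisfy a three-term recurrence whose
coefficients depend only on the radius and on the parity of the center. Hence the sum of `f` over
the sphere of radius `k` around `v` is `c_k (ε v) * f v`; for `f = 1`, the size of a sphere depends
only on its radius and on the parity of its center.

An eigenfunction of `M_2` on one parity class acquires this property when it is redefined on the
other class by its neighbor sums, so it is an eigenfunction of every `M_{2n}` on its class. The
eigenvalue is read off at `v_0`, where `φ` equals `1`: on the sphere of radius `2n` around `v_0`,
`φ` is constant with value `F (2n)`.
-/

open Finset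

lemma existsUnique_adj_dist_eq_of_isTree {V : Type*} {G : SimpleGraph V} (hG : G.IsTree)
    {r w : V} {k : ℕ} (hw : G.dist r w = k + 1) : ∃! u, G.Adj u w ∧ G.dist r u = k := by
  obtain ⟨p, hp, hplen⟩ := hG.connected.exists_path_of_dist r w
  have hnil : ¬ p.Nil := by
    rw [← SimpleGraph.Walk.length_eq_zero_iff]
    omega
  have hadj := p.adj_penultimate hnil
  refine ⟨p.penultimate, ⟨hadj, ?_⟩, ?_⟩
  · have hle : G.dist r p.penultimate ≤ k := by
      have hlast := SimpleGraph.dist_le p.dropLast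
      rw [SimpleGraph.Walk.length_dropLast] at hlast
      omega
    have hstep := hG.dist_eq_dist_add_one_of_adj r hadj
    omega
  · rintro u ⟨huw, hu⟩
    obtain ⟨q, hq⟩ := hG.connected.exists_walk_length_eq_dist r u
    have hqp : (q.concat huw).IsPath := (q.concat huw).isPath_of_length_eq_dist <| by
      rw [SimpleGraph.Walk.length_concat, hq, hu, hw]
    rw [(hG.existsUnique_path r w).unique hp hqp, SimpleGraph.Walk.penultimate_concat]

namespace SemiHomTree

variable {qp qm : ℕ} {V : Type} (T : SemiHomTree qp qm V)

lemma isTree : T.G.IsTree := ⟨T.connected, T.acyclic⟩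

/-- The branching number of the vertices of parity `b`: one less than their degree. -/
def branching (_ : SemiHomTree qp qm V) (b : Bool) : ℕ := if b then qp else qm

/-- The sphere of radius `n` around `v`. The neighbors of `v` form the sphere of radius `1`. -/
noncomputable def sphere (v : V) (n : ℕ) : Finset V := (T.sphere_finite v n).toFinset

/-- The neighbors of `w` that are farther than `w` from the vertex `r`, taken as root. -/
noncomputable def children (r w : V) : Finset V :=
  {u ∈ T.sphere w 1 | T.G.dist r u = T.G.dist r w + 1}

/-- The unnormalized averaging operator: the sum of `f` over the sphere of radius `n` around `v`,
for `f` with values in any additive commutative monoid. -/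
noncomputable def sphereSum {M : Type*} [AddCommMonoid M] (n : ℕ) (f : V → M) (v : V) : M :=
  ∑ w ∈ T.sphere v n, f w

lemma mem_sphere {v w : V} {n : ℕ} : w ∈ T.sphere v n ↔ T.G.dist v w = n := by simp [sphere]

lemma mem_sphere_one {v w : V} : w ∈ T.sphere v 1 ↔ T.G.Adj v w := by
  rw [mem_sphere, SimpleGraph.dist_eq_one_iff_adj]

lemma mem_children {r u w : V} :
    u ∈ T.children r w ↔ T.G.Adj w u ∧ T.G.dist r u = T.G.dist r w + 1 := by
  rw [children, mem_filter, mem_sphere_one]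

lemma sphere_zero (v : V) : T.sphere v 0 = {v} := by
  ext w
  rw [mem_sphere, T.connected.dist_eq_zero_iff, mem_singleton, eq_comm]

lemma eps_eq_iterate_not (v w : V) : T.eps w = not^[T.G.dist v w] (T.eps v) := by
  obtain ⟨p, hp⟩ := T.connected.exists_walk_length_eq_dist v w
  rw [← hp]
  clear hp
  induction p with
  | nil => rfl
  | cons hadj p ih => rw [ih, T.adj_parity hadj, SimpleGraph.Walk.length_cons,
      Function.iterate_succ_apply]

lemma eps_eq_of_dist_eq_two_mul {v w : V} {n : ℕ} (h : T.G.dist v w = 2 * n) :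
    T.eps w = T.eps v := by
  rw [T.eps_eq_iterate_not v w, h, Bool.involutive_not.iterate_two_mul, id]

lemma card_sphere_one (v : V) : #(T.sphere v 1) = T.branching (T.eps v) + 1 := by
  have hcard : #(T.sphere v 1) = {w | T.G.Adj v w}.ncard := by
    rw [← Set.ncard_coe_finset]
    congr 1
    ext w
    exact T.mem_sphere_one
  rw [hcard]
  cases hv : T.eps v with
  | true => exact T.degree_plus v hv
  | false => exact T.degree_minus v hv

lemma children_self (r : V) : T.children r r = T.sphere r 1 := by
  ext u
  simp [mem_children, mem_sphere_one]

lemma card_children_add_one {r w : V} (h : r ≠ w) : #(T.children r w) + 1 = #(T.sphere w 1) := by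
  obtain ⟨k, hk⟩ := Nat.exists_eq_succ_of_ne_zero (T.connected.pos_dist_of_ne h).ne'
  have hparent : #{u ∈ T.sphere w 1 | ¬ T.G.dist r u = T.G.dist r w + 1} = 1 := by
    rw [card_eq_one_iff_existsUnique]
    refine (existsUnique_congr fun u ↦ ?_).2 (existsUnique_adj_dist_eq_of_isTree T.isTree hk)
    rw [mem_filter, mem_sphere_one, T.G.adj_comm]
    refine and_congr_right fun huw ↦ ?_
    have hstep := T.isTree.dist_eq_dist_add_one_of_adj r huw
    omega
  rw [children, ← card_filter_add_card_filter_not (s := T.sphere w 1)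
    (fun u ↦ T.G.dist r u = T.G.dist r w + 1), hparent]

lemma card_children (r w : V) :
    #(T.children r w) = T.branching (T.eps w) + if T.G.dist r w = 0 then 1 else 0 := by
  rcases eq_or_ne r w with rfl | hne
  · rw [children_self, card_sphere_one, SimpleGraph.dist_self, if_pos rfl]
  · have hcount := T.card_children_add_one hne
    rw [card_sphere_one] at hcount
    rw [if_neg (T.connected.pos_dist_of_ne hne).ne']
    omega

lemma sphere_nonempty (hqp : 0 < qp) (hqm : 0 < qm) (v : V) (n : ℕ) :
    (T.sphere v n).Nonempty := by
  induction n with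
  | zero => exact ⟨v, T.mem_sphere.2 SimpleGraph.dist_self⟩
  | succ n ih =>
    obtain ⟨w, hw⟩ := ih
    have hbranch : 0 < T.branching (T.eps w) := by
      unfold branching
      split_ifs <;> assumption
    obtain ⟨u, hu⟩ : (T.children v w).Nonempty := by
      rw [← card_pos, card_children]
      omega
    exact ⟨u, T.mem_sphere.2 <| (T.mem_children.1 hu).2.trans <| by rw [T.mem_sphere.1 hw]⟩

section AddCommMonoid

variable {M : Type*} [AddCommMonoid M]

lemma sphereSum_zero (f : V → M) (v : V) : T.sphereSum 0 f v = f v := by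
  rw [sphereSum, sphere_zero, sum_singleton]

lemma sphereSum_congr {n : ℕ} {f g : V → M} {v : V}
    (h : ∀ w, T.G.dist v w = n → f w = g w) : T.sphereSum n f v = T.sphereSum n g v :=
  sum_congr rfl fun w hw ↦ h w (T.mem_sphere.1 hw)

-- A neighbor of a vertex at distance `k + 1` from `v` is at distance `k + 2` and reached from its
-- unique parent, or at distance `k` and reached once from each of its children.
lemma sphereSum_succ_sphereSum_one_eq_add_sum_children (k : ℕ) (f : V → M) (v : V) :
    T.sphereSum (k + 1) (T.sphereSum 1 f) v =
      T.sphereSum (k + 2) f v + ∑ w ∈ T.sphere v k, #(T.children v w) • f w := by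
  classical
  have hdisj : Disjoint (T.sphere v (k + 2)) (T.sphere v k) := by
    rw [disjoint_left]
    intro w
    rw [mem_sphere, mem_sphere]
    omega
  have hswap (u w : V) : u ∈ T.sphere v (k + 1) ∧ w ∈ T.sphere u 1 ↔
      u ∈ {u ∈ T.sphere w 1 | T.G.dist v u = k + 1} ∧
        w ∈ T.sphere v (k + 2) ∪ T.sphere v k := by
    rw [mem_union, mem_filter, mem_sphere_one, mem_sphere_one, mem_sphere, mem_sphere, mem_sphere,
      T.G.adj_comm w u]
    have hstep := T.isTree.dist_eq_dist_add_one_of_adj v (v := u) (w := w)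
    grind
  have hparent {w : V} (hw : T.G.dist v w = k + 2) :
      #{u ∈ T.sphere w 1 | T.G.dist v u = k + 1} = 1 := by
    simpa only [card_eq_one_iff_existsUnique, mem_filter, mem_sphere_one, T.G.adj_comm w]
      using existsUnique_adj_dist_eq_of_isTree T.isTree hw
  unfold sphereSum
  rw [sum_comm' hswap, sum_union hdisj]
  congr 1 <;> refine sum_congr rfl fun w hw ↦ ?_ <;> rw [mem_sphere] at hw <;> rw [sum_const]
  · rw [hparent hw, one_smul]
  · rw [children, hw]

lemma sphereSum_succ_sphereSum_one (k : ℕ) (f : V → M) (v : V) :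
    T.sphereSum (k + 1) (T.sphereSum 1 f) v = T.sphereSum (k + 2) f v +
      (T.branching (not^[k] (T.eps v)) + if k = 0 then 1 else 0) • T.sphereSum k f v := by
  rw [sphereSum_succ_sphereSum_one_eq_add_sum_children]
  congr 1
  refine Eq.trans (sum_congr rfl fun w hw ↦ ?_) smul_sum.symm
  rw [card_children, T.eps_eq_iterate_not v w, T.mem_sphere.1 hw]

lemma sphereSum_one_sphereSum_one (f : V → M) (v : V) :
    T.sphereSum 1 (T.sphereSum 1 f) v =
      T.sphereSum 2 f v + (T.branching (T.eps v) + 1) • f v := by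
  simpa only [sphereSum_zero, Function.iterate_zero, id, if_true, zero_add]
    using T.sphereSum_succ_sphereSum_one 0 f v

end AddCommMonoid

section Module

variable {R M : Type*} [Ring R] [AddCommGroup M] [Module R M]

lemma exists_sphereSum_eq_smul {f : V → M} {α : Bool → R}
    (hf : ∀ v, T.sphereSum 1 f v = α (T.eps v) • f v) (k : ℕ) :
    ∃ c : Bool → R, ∀ v, T.sphereSum k f v = c (T.eps v) • f v := by
  induction k using Nat.twoStepInduction with
  | zero => exact ⟨1, fun v ↦ by rw [sphereSum_zero, Pi.one_apply, one_smul]⟩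
  | one => exact ⟨α, hf⟩
  | more k ih₀ ih₁ =>
    obtain ⟨c₀, hc₀⟩ := ih₀
    obtain ⟨c₁, hc₁⟩ := ih₁
    refine ⟨fun b ↦ α (not^[k + 1] b) * c₁ b -
      ((T.branching (not^[k] b) + if k = 0 then 1 else 0 : ℕ) : R) * c₀ b, fun v ↦ ?_⟩
    have hlap : T.sphereSum (k + 1) (T.sphereSum 1 f) v =
        α (not^[k + 1] (T.eps v)) • T.sphereSum (k + 1) f v := by
      refine Eq.trans (sum_congr rfl fun w hw ↦ ?_) smul_sum.symm
      rw [hf, T.eps_eq_iterate_not v w, T.mem_sphere.1 hw]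
    rw [sub_smul, mul_smul, mul_smul, ← hc₀, ← hc₁, ← hlap, Nat.cast_smul_eq_nsmul,
      sphereSum_succ_sphereSum_one, add_sub_cancel_right]

lemma exists_sphereSum_two_mul_eq_smul {f : V → M} {b : Bool} {c : R}
    (hf : ∀ v, T.eps v = b → T.sphereSum 2 f v = c • f v) (n : ℕ) :
    ∃ d : R, ∀ v, T.eps v = b → T.sphereSum (2 * n) f v = d • f v := by
  let g : V → M := fun v ↦ if T.eps v = b then f v else T.sphereSum 1 f v
  let α : Bool → R := fun b' ↦ if b' = b then c + (T.branching b + 1 : ℕ) else 1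
  have hg : ∀ v, T.sphereSum 1 g v = α (T.eps v) • g v := by
    intro v
    by_cases hv : T.eps v = b
    · have hgv : g v = f v := if_pos hv
      have hα : α b = c + (T.branching b + 1 : ℕ) := if_pos rfl
      have hnbr : T.sphereSum 1 g v = T.sphereSum 1 (T.sphereSum 1 f) v :=
        T.sphereSum_congr fun w hw ↦ if_neg <| by
          rw [T.adj_parity (SimpleGraph.dist_eq_one_iff_adj.1 hw), hv]
          exact Bool.not_ne_self b
      rw [hnbr, sphereSum_one_sphereSum_one, hf v hv, hgv, hv, hα, add_smul c,
        Nat.cast_smul_eq_nsmul]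
    · have hgv : g v = T.sphereSum 1 f v := if_neg hv
      have hα : α (T.eps v) = 1 := if_neg hv
      have hnbr : T.sphereSum 1 g v = T.sphereSum 1 f v :=
        T.sphereSum_congr fun w hw ↦ if_pos <| by
          rw [T.adj_parity (SimpleGraph.dist_eq_one_iff_adj.1 hw), Bool.not_eq]
          exact hv
      rw [hnbr, hgv, hα, one_smul]
  obtain ⟨d, hd⟩ := T.exists_sphereSum_eq_smul hg (2 * n)
  refine ⟨d b, fun v hv ↦ ?_⟩
  have hfg : T.sphereSum (2 * n) g v = T.sphereSum (2 * n) f v :=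
    T.sphereSum_congr fun w hw ↦ if_pos <| (T.eps_eq_of_dist_eq_two_mul hw).trans hv
  rw [← hfg, hd v, hv]
  exact congrArg (d b • ·) (if_pos hv)

end Module

lemma card_sphere_eq_of_eps_eq {v w : V} (h : T.eps v = T.eps w) (n : ℕ) :
    #(T.sphere v n) = #(T.sphere w n) := by
  obtain ⟨c, hc⟩ := T.exists_sphereSum_eq_smul (f := fun _ ↦ (1 : ℤ))
    (α := fun b ↦ (T.branching b : ℤ) + 1) (fun v ↦ by simp [sphereSum, card_sphere_one]) n
  have hcard (x : V) : (#(T.sphere x n) : ℤ) = c (T.eps x) := by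
    simpa only [sphereSum, sum_const, nsmul_one, smul_eq_mul, mul_one] using hc x
  exact_mod_cast (hcard v).trans (h ▸ (hcard w).symm)

lemma Mop_eq_inv_card_mul_sphereSum (n : ℕ) (f : V → ℂ) (v : V) :
    Mop T n f v = (#(T.sphere v n) : ℂ)⁻¹ * T.sphereSum n f v := by
  rw [Mop, Set.ncard_eq_toFinset_card _ (T.sphere_finite v n),
    finsum_mem_eq_finite_toFinset_sum f (T.sphere_finite v n), sphereSum, sphere]

lemma Mop_eq_of_forall_dist_eq (hqp : 0 < qp) (hqm : 0 < qm) {n : ℕ} {f : V → ℂ} {v : V} {a : ℂ}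
    (h : ∀ w, T.G.dist v w = n → f w = a) : Mop T n f v = a := by
  rw [Mop_eq_inv_card_mul_sphereSum, T.sphereSum_congr h, sphereSum, sum_const, nsmul_eq_mul,
    inv_mul_cancel_left₀]
  exact Nat.cast_ne_zero.2 (T.sphere_nonempty hqp hqm v n).card_ne_zero

lemma exists_Mop_two_mul_eq_mul (hqp : 0 < qp) (hqm : 0 < qm) {f : V → ℂ} {v₀ : V} {μ : ℂ}
    (hf : ∀ v, T.eps v = T.eps v₀ → Mop T 2 f v = μ * f v) (n : ℕ) :
    ∃ c : ℂ, ∀ v, T.eps v = T.eps v₀ → Mop T (2 * n) f v = c * f v := by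
  have hsum (v : V) (hv : T.eps v = T.eps v₀) :
      T.sphereSum 2 f v = (#(T.sphere v₀ 2) * μ : ℂ) • f v := by
    have hcard : (#(T.sphere v 2) : ℂ) ≠ 0 :=
      Nat.cast_ne_zero.2 (T.sphere_nonempty hqp hqm v 2).card_ne_zero
    rw [smul_eq_mul, mul_assoc, ← hf v hv, Mop_eq_inv_card_mul_sphereSum,
      ← T.card_sphere_eq_of_eps_eq hv, mul_inv_cancel_left₀ hcard]
  obtain ⟨d, hd⟩ := T.exists_sphereSum_two_mul_eq_smul hsum n
  refine ⟨(#(T.sphere v₀ (2 * n)) : ℂ)⁻¹ * d, fun v hv ↦ ?_⟩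
  rw [Mop_eq_inv_card_mul_sphereSum, hd v hv, T.card_sphere_eq_of_eps_eq hv, smul_eq_mul, mul_assoc]

end SemiHomTree

theorem stmt_16_general {qp qm : ℕ} (hqp : 0 < qp) (hqm : 0 < qm) {V : Type}
    (T : SemiHomTree qp qm V) (v0 : V) (φ : V → ℂ) (F : ℕ → ℂ)
    (hrad : ∀ v : V, T.eps v = T.eps v0 → φ v = F (T.G.dist v0 v))
    (hone : φ v0 = 1)
    (heig : ∀ v : V, T.eps v = T.eps v0 → Mop T 2 φ v = F 2 * φ v) :
    ∀ (n : ℕ) (v : V), T.eps v = T.eps v0 → Mop T (2 * n) φ v = F (2 * n) * φ v := by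
  intro n
  obtain ⟨c, hc⟩ := T.exists_Mop_two_mul_eq_mul hqp hqm heig n
  have hroot : Mop T (2 * n) φ v0 = F (2 * n) := T.Mop_eq_of_forall_dist_eq hqp hqm fun w hw ↦ by
    rw [hrad w (T.eps_eq_of_dist_eq_two_mul hw), hw]
  have hcF : c = F (2 * n) := by rw [← hroot, hc v0 rfl, hone, mul_one]
  exact hcF ▸ hc

theorem stmt_16 {qp qm : ℕ} (hqp : 2 ≤ qp) (hqm : 2 ≤ qm) {V : Type}
    (T : SemiHomTree qp qm V) (v0 : V) (hv0 : T.eps v0 = true)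
    (φ : V → ℂ) (F : ℕ → ℂ)
    (hrad : ∀ v : V, T.eps v = true → φ v = F (T.G.dist v0 v))
    (hone : φ v0 = 1)
    (heig : ∀ v : V, T.eps v = true → Mop T 2 φ v = F 2 * φ v) :
    ∀ (n : ℕ) (v : V), T.eps v = true → Mop T (2 * n) φ v = F (2 * n) * φ v := by
  rw [← hv0] at hrad heig ⊢
  exact stmt_16_general (by omega) (by omega) T v0 φ F hrad hone heig
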